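/- Let Δ = (E,H) with E,H ∈ ℝ^{l×n} and let 𝒱* be the limit of the first Wong sequence of Δ. Then 𝒱* is the maximal invariant subspace ℳ* of Δ: 𝒱* is an invariant subspace of Δ, and every invariant subspace M of Δ satisfies M ⊆ 𝒱*. -/

import Mathlib

noncomputable section

open Matrix

/-- A solution of the DAE `E ẋ = H x`. -/
def IsSolution {l n : ℕ} (E H : Matrix (Fin l) (Fin n) ℝ)
    (x : ℝ → (Fin n → ℝ)) : Prop :=
  Differentiable ℝ x ∧ ∀ t : ℝ, E.mulVec (deriv x t) = H.mulVec (x t)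

/-- `M` is an invariant subspace of the DAE `E ẋ = H x`. -/
def IsInvariantSubspace {l n : ℕ} (E H : Matrix (Fin l) (Fin n) ℝ)
    (M : Submodule ℝ (Fin n → ℝ)) : Prop :=
  ∀ x0 ∈ M, ∃ x : ℝ → (Fin n → ℝ),
    IsSolution E H x ∧ x 0 = x0 ∧ ∀ t : ℝ, x t ∈ M

/-- The first Wong sequence of the DAE `(E,H)`: `𝒱₀ = ⊤`, `𝒱_{i+1} = H⁻¹(E 𝒱_i)`;
its limit is `𝒱* = 𝒱_n`. -/
def wongV {L N : Type*} [Fintype L] [Fintype N] (E H : Matrix L N ℝ) :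
    ℕ → Submodule ℝ (N → ℝ)
  | 0 => ⊤
  | i + 1 => Submodule.comap H.mulVecLin (Submodule.map E.mulVecLin (wongV E H i))

/-!
A subspace `M` is invariant iff `M ≤ H⁻¹(E M)`: the derivative of a curve in `M` stays in `M`, and
conversely, if `H M ⊆ E M`, then `H` agrees on `M` with `E ∘ A` for an endomorphism `A` of `M`, so
that `t ↦ exp (t A) x₀` is a solution in `M`. By Knaster–Tarski the largest such `M` is the greatest
fixed point of the monotone map `V ↦ H⁻¹(E V)`. Iterating this map from `⊤` strictly lowers the
dimension until the iterates become constant, hence reaches that fixed point within `n` steps.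
-/

section Order

theorem isFixedPt_iterate_of_map_le {α : Type*} [PartialOrder α] {f : α → α} (hf : Monotone f)
    {μ : α → ℕ} (hμ : StrictMono μ) {x : α} (hx : f x ≤ x) {n : ℕ} (hn : μ x ≤ n) :
    Function.IsFixedPt f (f^[n] x) := by
  induction n generalizing x with
  | zero => exact hx.eq_of_not_lt fun hlt => (hμ hlt).not_ge (hn.trans (Nat.zero_le _))
  | succ n ih =>
    rcases hx.eq_or_lt with hfix | hlt
    · rwa [Function.iterate_fixed hfix]
    · exact ih (hf hx) (Nat.le_of_lt_succ ((hμ hlt).trans_le hn))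

theorem gfp_eq_iterate_top {α : Type*} [CompleteLattice α] (f : α →o α) {μ : α → ℕ}
    (hμ : StrictMono μ) {n : ℕ} (hn : μ ⊤ ≤ n) : f.gfp = f^[n] ⊤ := by
  have hfix : f (f^[n] ⊤) = f^[n] ⊤ := isFixedPt_iterate_of_map_le f.monotone hμ le_top hn
  apply le_antisymm
  · calc f.gfp = f^[n] f.gfp := (Function.iterate_fixed f.map_gfp n).symm
      _ ≤ f^[n] ⊤ := f.monotone.iterate n le_top
  · exact f.le_gfp hfix.ge

end Order

section WongStep

variable {R V W : Type*} [Semiring R] [AddCommMonoid V] [Module R V] [AddCommMonoid W] [Module R W]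

/-- The map `U ↦ H⁻¹(E U)` on subspaces, whose iterates at `⊤` form the first Wong sequence of the
pencil `(E, H)`. It is bundled as a monotone map to have its greatest fixed point available. -/
def wongStep (E H : V →ₗ[R] W) : Submodule R V →o Submodule R V where
  toFun U := (U.map E).comap H
  monotone' _ _ hU := Submodule.comap_mono (Submodule.map_mono hU)

theorem exists_end_of_le_wongStep {E H : V →ₗ[R] W} {M : Submodule R V} [Module.Projective R M]
    (hM : M ≤ wongStep E H M) : ∃ A : M →ₗ[R] M, ∀ v : M, E (A v) = H v := by
  obtain ⟨A, hA⟩ := Module.projective_lifting_property (E.submoduleMap M) (H.restrict hM)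
    (E.submoduleMap_surjective M)
  exact ⟨A, fun v => congrArg Subtype.val (LinearMap.congr_fun hA v)⟩

end WongStep

theorem wongV_eq_iterate_wongStep {L N : Type*} [Fintype L] [Fintype N] (E H : Matrix L N ℝ)
    (i : ℕ) : wongV E H i = (wongStep E.mulVecLin H.mulVecLin)^[i] ⊤ := by
  induction i with
  | zero => rfl
  | succ i ih => rw [Function.iterate_succ_apply', ← ih]; rfl

section Calculus

theorem deriv_mem_of_forall_mem {𝕜 F : Type*} [NontriviallyNormedField 𝕜] [NormedAddCommGroup F]
    [NormedSpace 𝕜 F] {M : Submodule 𝕜 F} (hM : IsClosed (M : Set F)) {x : 𝕜 → F}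
    (hx : ∀ t, x t ∈ M) (t : 𝕜) : deriv x t ∈ M := by
  have hspan : Submodule.span 𝕜 (x '' Set.univ) ≤ M :=
    Submodule.span_le.mpr (Set.image_subset_iff.mpr fun s _ => hx s)
  exact closure_minimal hspan hM
    (range_deriv_subset_closure_span_image x dense_univ (Set.mem_range_self t))

theorem exists_forall_hasDerivAt_clm {𝕜 F : Type*} [RCLike 𝕜] [NormedAddCommGroup F]
    [NormedSpace 𝕜 F] [CompleteSpace F] (A : F →L[𝕜] F) (y₀ : F) :
    ∃ y : 𝕜 → F, y 0 = y₀ ∧ ∀ t, HasDerivAt y (A (y t)) t := by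
  refine ⟨fun t => NormedSpace.exp (t • A) y₀, by simp, fun t => ?_⟩
  simpa using (hasDerivAt_exp_smul_const' A t).clm_apply (hasDerivAt_const t y₀)

end Calculus

section Pencil

variable {𝕜 F W : Type*} [RCLike 𝕜] [NormedAddCommGroup F] [NormedSpace 𝕜 F] [AddCommGroup W]
  [Module 𝕜 W]

/-- A solution of the linear DAE `E ẋ = H x` for linear maps `E`, `H`, extending `IsSolution` from
real matrices. Time runs over the scalar field `𝕜`. -/
def IsPencilSolution (E H : F →ₗ[𝕜] W) (x : 𝕜 → F) : Prop :=
  Differentiable 𝕜 x ∧ ∀ t, E (deriv x t) = H (x t)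

/-- An invariant subspace of the linear DAE `E ẋ = H x` for linear maps `E`, `H`, extending
`IsInvariantSubspace` from real matrices. -/
def IsPencilInvariant (E H : F →ₗ[𝕜] W) (M : Submodule 𝕜 F) : Prop :=
  ∀ x₀ ∈ M, ∃ x : 𝕜 → F, IsPencilSolution E H x ∧ x 0 = x₀ ∧ ∀ t, x t ∈ M

variable {E H : F →ₗ[𝕜] W} {M : Submodule 𝕜 F}

theorem IsPencilInvariant.le_wongStep (hM : IsPencilInvariant E H M)
    (hclosed : IsClosed (M : Set F)) : M ≤ wongStep E H M := by
  intro x₀ hx₀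
  obtain ⟨x, ⟨-, hx⟩, rfl, hxM⟩ := hM x₀ hx₀
  exact ⟨deriv x 0, deriv_mem_of_forall_mem hclosed hxM 0, hx 0⟩

theorem isPencilInvariant_of_le_wongStep [FiniteDimensional 𝕜 M] (hM : M ≤ wongStep E H M) :
    IsPencilInvariant E H M := by
  intro x₀ hx₀
  have : CompleteSpace M := FiniteDimensional.complete 𝕜 M
  obtain ⟨A, hA⟩ := exists_end_of_le_wongStep hM
  obtain ⟨y, hy₀, hy⟩ := exists_forall_hasDerivAt_clm A.toContinuousLinearMap ⟨x₀, hx₀⟩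
  have hderiv (t : 𝕜) : HasDerivAt (fun s => (y s : F)) (A (y t)) t :=
    M.subtypeL.hasFDerivAt.comp_hasDerivAt t (hy t)
  have hsol : IsPencilSolution E H fun t => (y t : F) :=
    ⟨fun t => (hderiv t).differentiableAt, fun t => by rw [(hderiv t).deriv, hA]⟩
  exact ⟨fun t => y t, hsol, congrArg Subtype.val hy₀, fun t => (y t).2⟩

theorem isPencilInvariant_iff_le_wongStep [FiniteDimensional 𝕜 M] :
    IsPencilInvariant E H M ↔ M ≤ wongStep E H M :=
  ⟨fun hM => hM.le_wongStep M.closed_of_finiteDimensional, isPencilInvariant_of_le_wongStep⟩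

theorem stmt13_general [FiniteDimensional 𝕜 F] (E H : F →ₗ[𝕜] W) {n : ℕ}
    (hn : Module.finrank 𝕜 F ≤ n) :
    IsGreatest {M | IsPencilInvariant E H M} ((wongStep E H)^[n] ⊤) := by
  have hgfp : (wongStep E H).gfp = (wongStep E H)^[n] ⊤ :=
    gfp_eq_iterate_top _ Submodule.finrank_strictMono (by rwa [finrank_top])
  simpa only [isPencilInvariant_iff_le_wongStep, hgfp] using (wongStep E H).isGreatest_gfp_le

end Pencil

/-- The limit `𝒱*` of the first Wong sequence is the maximal
invariant subspace of `Δ = (E,H)`. -/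
theorem stmt13 {l n : ℕ} (E H : Matrix (Fin l) (Fin n) ℝ) :
    IsInvariantSubspace E H (wongV E H n) ∧
    (∀ M : Submodule ℝ (Fin n → ℝ), IsInvariantSubspace E H M → M ≤ wongV E H n) := by
  rw [wongV_eq_iterate_wongStep]
  exact stmt13_general E.mulVecLin H.mulVecLin (Module.finrank_fin_fun ℝ).le
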